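/- Lemma 3: fix an iteration i (1 ≤ i ≤ ⌈m/2⌉) of Algorithm 2 run with the x-approval rule, and let s_k(c) be the total score of candidate c in F(p⃗ ∪ p⃗_M) after all k stages. Then for all u_1, u_2 ∈ U^i, |s_k(u_1) − s_k(u_2)| ≤ 1, and for all d_1, d_2 ∈ D^i, |s_k(d_1) − s_k(d_2)| ≤ 1. -/

import Mathlib

open Finset
open scoped Classical

variable {O : Type*} [Fintype O] [DecidableEq O]

/-- A vote is a strict total order on the outcome set `O`, represented by its position
function: `p o` is the number of outcomes that `o` is preferred over, so the most
preferred outcome has position `m - 1` and the least preferred position `0`. -/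
def IsVote (p : O → ℕ) : Prop :=
  Function.Injective p ∧ ∀ o : O, p o < Fintype.card O

/-- The total score of candidate `c` under the scoring vector `sc` (`sc j` is the number
of points awarded to the candidate at position `j`) for the profile `P`. -/
def score (sc : ℕ → ℤ) (P : List (O → ℕ)) (c : O) : ℤ :=
  (P.map fun q => sc (q c)).sum

/-- The positional scoring rule used as a social welfare function: candidates are ordered
by decreasing total score, ties being broken by the fixed strict tie-breaking order `tb`
(a smaller `tb`-value means preferred by the tie-breaking order).  The output is again a
position function: the position of `c` is the number of candidates ranked below `c`. -/
def swf (sc : ℕ → ℤ) (tb : O → ℕ) (P : List (O → ℕ)) : O → ℕ := fun c =>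
  (univ.filter fun c' =>
      score sc P c' < score sc P c ∨ (score sc P c' = score sc P c ∧ tb c < tb c')).card

/-- `topSet p j = A^j(p)`, the set of the `j` most preferred outcomes of `p`. -/
def topSet (p : O → ℕ) (j : ℕ) : Finset O :=
  univ.filter fun o => Fintype.card O - j ≤ p o

/-- The least `j ≥ 1` for which `A^j(p_t) ∩ A^j(p_o)` is nonempty, i.e. the iteration at
which the Rational Compromise rule terminates. -/
noncomputable def rcIndex (pt po : O → ℕ) : ℕ :=
  sInf {j | 1 ≤ j ∧ (topSet pt j ∩ topSet po j).Nonempty}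

/-- The Rational Compromise bargaining rule: `A^j(p_t) ∩ A^j(p_o)` for the least `j ≥ 1`
making this intersection nonempty. -/
noncomputable def RC (pt po : O → ℕ) : Finset O :=
  topSet pt (rcIndex pt po) ∩ topSet po (rcIndex pt po)

/-- The `n` most preferred members of `S` according to the ranking `r`. -/
def topWithin (r : O → ℕ) (S : Finset O) (n : ℕ) : Finset O :=
  S.filter fun o => (S.filter fun o' => r o < r o').card < n

/-- The `n` least preferred members of `S` according to the ranking `r`. -/
def botWithin (r : O → ℕ) (S : Finset O) (n : ℕ) : Finset O :=
  S.filter fun o => (S.filter fun o' => r o' < r o).card < n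

/-- The vote built by the algorithms from a current ranking `r` and a set `H`:
the members of `H` occupy the `|H|` highest positions in reverse order of `r`
(the `r`-least preferred member of `H` is placed highest), and the members of `O ∖ H`
occupy the remaining lowest positions in reverse order of `r` (the `r`-most preferred
of them is placed lowest). -/
def buildVote (r : O → ℕ) (H : Finset O) : O → ℕ := fun o =>
  if o ∈ H then Fintype.card O - H.card + (H.filter fun h => r o < r h).card
  else (univ.filter fun c => c ∉ H ∧ r o < r c).card

/-- `H^i` for the constructive algorithms: the preferred outcome `p` together with the
`i - 1` most preferred outcomes of `p_t` that do not belong to `A^i(p_o)`. -/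
def Hset (pt po : O → ℕ) (p : O) (i : ℕ) : Finset O :=
  insert p (topWithin pt ((univ \ topSet po i).erase p) (i - 1))

/-- `H^i` for the destructive algorithms: `p*`, the most preferred outcome of `p_t` other
than `e` that belongs to `A^i(p_o)`, together with the `i - 1` most preferred outcomes of
`p_t` other than `e` and `p*`. -/
def HsetD (pt po : O → ℕ) (e : O) (i : ℕ) : Finset O :=
  topWithin pt ((topSet po i).erase e) 1 ∪
    topWithin pt ((univ.erase e) \ topWithin pt ((topSet po i).erase e) 1) (i - 1)

/-- The manipulator profile built by Algorithm 2 (for a fixed iteration whose set is `H`)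
after the given number of stages: at each stage one more vote is appended, built from the
current social ranking `F(p⃗ ∪ p⃗_M)`. -/
def stageProfile (sc : ℕ → ℤ) (tb : O → ℕ) (P : List (O → ℕ)) (H : Finset O) :
    ℕ → List (O → ℕ)
  | 0 => []
  | n + 1 =>
      stageProfile sc tb P H n ++
        [buildVote (swf sc tb (P ++ stageProfile sc tb P H n)) H]

/-- The vote constructed by Algorithm 2 at stage `ℓ` (1-indexed). -/
def stageVote (sc : ℕ → ℤ) (tb : O → ℕ) (P : List (O → ℕ)) (H : Finset O) (ℓ : ℕ) :
    O → ℕ :=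
  buildVote (swf sc tb (P ++ stageProfile sc tb P H (ℓ - 1))) H

/-- The sets `U^i_s`:  `U^i_0` consists of the member of `H^i` with the lowest position in
`p_t`, and `U^i_{s+1}` adds every candidate ranked above some member of `U^i_s` by the
stage-`l` vote (`1 ≤ l < k`) but below some member of `U^i_s` by the stage-`(l+1)` vote. -/
noncomputable def Uaux (sc : ℕ → ℤ) (tb : O → ℕ) (P : List (O → ℕ)) (pt : O → ℕ)
    (H : Finset O) (k : ℕ) : ℕ → Finset O
  | 0 => botWithin pt H 1
  | s + 1 =>
      Uaux sc tb P pt H k s ∪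
        univ.filter fun u =>
          ∃ l, 1 ≤ l ∧ l < k ∧
            (∃ u' ∈ Uaux sc tb P pt H k s,
              stageVote sc tb P H l u' < stageVote sc tb P H l u) ∧
            (∃ u' ∈ Uaux sc tb P pt H k s,
              stageVote sc tb P H (l + 1) u < stageVote sc tb P H (l + 1) u')

/-- `U^i = ⋃ₛ U^i_s`. -/
noncomputable def Uset (sc : ℕ → ℤ) (tb : O → ℕ) (P : List (O → ℕ)) (pt : O → ℕ)
    (H : Finset O) (k : ℕ) : Finset O :=
  univ.filter fun u => ∃ s, u ∈ Uaux sc tb P pt H k s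

/-- The sets `D^i_s`: `D^i_0` consists of the member of `O ∖ H^i` with the highest position
in `p_t`, and `D^i_{s+1}` adds every candidate ranked below some member of `D^i_s` by the
stage-`l` vote (`1 ≤ l < k`) but above some member of `D^i_s` by the stage-`(l+1)` vote. -/
noncomputable def Daux (sc : ℕ → ℤ) (tb : O → ℕ) (P : List (O → ℕ)) (pt : O → ℕ)
    (H : Finset O) (k : ℕ) : ℕ → Finset O
  | 0 => topWithin pt (univ \ H) 1
  | s + 1 =>
      Daux sc tb P pt H k s ∪
        univ.filter fun d =>
          ∃ l, 1 ≤ l ∧ l < k ∧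
            (∃ d' ∈ Daux sc tb P pt H k s,
              stageVote sc tb P H l d < stageVote sc tb P H l d') ∧
            (∃ d' ∈ Daux sc tb P pt H k s,
              stageVote sc tb P H (l + 1) d' < stageVote sc tb P H (l + 1) d)

/-- `D^i = ⋃ₛ D^i_s`. -/
noncomputable def Dset (sc : ℕ → ℤ) (tb : O → ℕ) (P : List (O → ℕ)) (pt : O → ℕ)
    (H : Finset O) (k : ℕ) : Finset O :=
  univ.filter fun d => ∃ s, d ∈ Daux sc tb P pt H k s

/-- The Borda scoring vector `(m-1, m-2, …, 1, 0)`: position `j` gets `j` points. -/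
def bordaVec : ℕ → ℤ := fun j => (j : ℤ)

/-- The `x`-approval scoring vector for `m` candidates: the `x` highest positions get one
point, the rest get zero. -/
def approvalVec (m x : ℕ) : ℕ → ℤ := fun j => if m ≤ j + x then 1 else 0

/-- `sc` is a scoring vector for `m` candidates: `s_{m-1} ≥ … ≥ s_0 ≥ 0` and
`s_{m-1} > s_0`. -/
def IsScoringVector (m : ℕ) (sc : ℕ → ℤ) : Prop :=
  (∀ j, j + 1 < m → sc j ≤ sc (j + 1)) ∧ 0 ≤ sc 0 ∧ sc 0 < sc (m - 1)

/-- Algorithm 1 (constructive single-voter manipulation) returns the vote `pa`: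
the guard `pos(p, p_o) ≥ ⌈m/2⌉` holds and `pa` is the vote built at the first iteration
`i ∈ {1, …, ⌈m/2⌉}` at which the manipulation check succeeds. -/
def alg1Returns (sc : ℕ → ℤ) (tb : O → ℕ) (P : List (O → ℕ)) (po : O → ℕ) (p : O)
    (pa : O → ℕ) : Prop :=
  (Fintype.card O + 1) / 2 ≤ po p ∧
    ∃ i, 1 ≤ i ∧ i ≤ (Fintype.card O + 1) / 2 ∧
      pa = buildVote (swf sc tb P) (Hset (swf sc tb P) po p i) ∧
      RC (swf sc tb (P ++ [pa])) po = {p} ∧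
      ∀ j, 1 ≤ j → j < i →
        RC (swf sc tb (P ++ [buildVote (swf sc tb P) (Hset (swf sc tb P) po p j)])) po ≠
          {p}

/-- Algorithm 2 (constructive coalitional manipulation) run with `k` manipulators returns
the profile `PM`: the guard `pos(p, p_o) ≥ ⌈m/2⌉` holds and `PM` is the `k`-stage profile
built at the first iteration `i ∈ {1, …, ⌈m/2⌉}` at which the manipulation check succeeds. -/
def alg2Returns (sc : ℕ → ℤ) (tb : O → ℕ) (P : List (O → ℕ)) (po : O → ℕ) (p : O)
    (k : ℕ) (PM : List (O → ℕ)) : Prop :=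
  (Fintype.card O + 1) / 2 ≤ po p ∧
    ∃ i, 1 ≤ i ∧ i ≤ (Fintype.card O + 1) / 2 ∧
      PM = stageProfile sc tb P (Hset (swf sc tb P) po p i) k ∧
      RC (swf sc tb (P ++ PM)) po = {p} ∧
      ∀ j, 1 ≤ j → j < i →
        RC (swf sc tb (P ++ stageProfile sc tb P (Hset (swf sc tb P) po p j) k)) po ≠ {p}

/-- The modified Algorithm 1 (destructive single-voter manipulation) returns the vote
`pa`: the guard `pos(e, p_o) < ⌊m/2⌋` fails and `pa` is the vote built at the first
iteration `i ∈ {1, …, ⌈m/2⌉}` at which `e` is excluded from the Rational Compromise. -/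
def alg1ReturnsD (sc : ℕ → ℤ) (tb : O → ℕ) (P : List (O → ℕ)) (po : O → ℕ) (e : O)
    (pa : O → ℕ) : Prop :=
  Fintype.card O / 2 ≤ po e ∧
    ∃ i, 1 ≤ i ∧ i ≤ (Fintype.card O + 1) / 2 ∧
      pa = buildVote (swf sc tb P) (HsetD (swf sc tb P) po e i) ∧
      e ∉ RC (swf sc tb (P ++ [pa])) po ∧
      ∀ j, 1 ≤ j → j < i →
        e ∈ RC (swf sc tb (P ++ [buildVote (swf sc tb P) (HsetD (swf sc tb P) po e j)])) po

/-- The modified Algorithm 2 (destructive coalitional manipulation) run with `k`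
manipulators returns the profile `PM`: the guard `pos(e, p_o) < ⌊m/2⌋` fails and `PM` is
the `k`-stage profile built at the first iteration `i ∈ {1, …, ⌈m/2⌉}` at which `e` is
excluded from the Rational Compromise. -/
def alg2ReturnsD (sc : ℕ → ℤ) (tb : O → ℕ) (P : List (O → ℕ)) (po : O → ℕ) (e : O)
    (k : ℕ) (PM : List (O → ℕ)) : Prop :=
  Fintype.card O / 2 ≤ po e ∧
    ∃ i, 1 ≤ i ∧ i ≤ (Fintype.card O + 1) / 2 ∧
      PM = stageProfile sc tb P (HsetD (swf sc tb P) po e i) k ∧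
      e ∉ RC (swf sc tb (P ++ PM)) po ∧
      ∀ j, 1 ≤ j → j < i →
        e ∈ RC (swf sc tb (P ++ stageProfile sc tb P (HsetD (swf sc tb P) po e j) k)) po

/-- The set `U^i` arising from running the `k` stages of Algorithm 2 at iteration `i`. -/
noncomputable def UsetAlg (sc : ℕ → ℤ) (tb : O → ℕ) (P : List (O → ℕ)) (po : O → ℕ)
    (p : O) (i k : ℕ) : Finset O :=
  Uset sc tb P (swf sc tb P) (Hset (swf sc tb P) po p i) k

/-- The set `D^i` arising from running the `k` stages of Algorithm 2 at iteration `i`. -/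
noncomputable def DsetAlg (sc : ℕ → ℤ) (tb : O → ℕ) (P : List (O → ℕ)) (po : O → ℕ)
    (p : O) (i k : ℕ) : Finset O :=
  Dset sc tb P (swf sc tb P) (Hset (swf sc tb P) po p i) k

/-- The vote constructed at stage `ℓ` of iteration `i` of Algorithm 2. -/
def stageVoteAlg (sc : ℕ → ℤ) (tb : O → ℕ) (P : List (O → ℕ)) (po : O → ℕ)
    (p : O) (i ℓ : ℕ) : O → ℕ :=
  stageVote sc tb P (Hset (swf sc tb P) po p i) ℓ

/-- `s_ℓ(c)`: the total score of candidate `c` in `F(p⃗ ∪ p⃗_M)` after stage `ℓ` of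
iteration `i` of Algorithm 2. -/
def stageScoreAlg (sc : ℕ → ℤ) (tb : O → ℕ) (P : List (O → ℕ)) (po : O → ℕ)
    (p : O) (i ℓ : ℕ) (c : O) : ℤ :=
  score sc (P ++ stageProfile sc tb P (Hset (swf sc tb P) po p i) ℓ) c

/-- `F(p⃗ ∪ p⃗_M)` after stage `ℓ` of iteration `i` of Algorithm 2. -/
def stageSwfAlg (sc : ℕ → ℤ) (tb : O → ℕ) (P : List (O → ℕ)) (po : O → ℕ)
    (p : O) (i ℓ : ℕ) : O → ℕ :=
  swf sc tb (P ++ stageProfile sc tb P (Hset (swf sc tb P) po p i) ℓ)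

/-- `e` is ranked strictly below `c` by the scores `f` with tie-breaking order `tb`. -/
def Below (f : O → ℤ) (tb : O → ℕ) (e c : O) : Prop :=
  f e < f c ∨ (f e = f c ∧ tb c < tb e)

omit [Fintype O] [DecidableEq O] in
lemma Below.trans {f : O → ℤ} {tb : O → ℕ} {a b c : O} (h₁ : Below f tb a b)
    (h₂ : Below f tb b c) : Below f tb a c := by
  unfold Below at *
  omega

omit [Fintype O] [DecidableEq O] in
lemma Below.asymm {f : O → ℤ} {tb : O → ℕ} {a b : O} (h₁ : Below f tb a b) :
    ¬ Below f tb b a := by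
  unfold Below at *
  omega

/-- The member `c` of `S` is among the `y` lowest members of `S`. -/
def Raised (S : Finset O) (y : ℕ) (f : O → ℤ) (tb : O → ℕ) (c : O) : Prop :=
  #{e ∈ S | Below f tb e c} < y

omit [Fintype O] [DecidableEq O] in
lemma Raised.of_below {S : Finset O} {y : ℕ} {f : O → ℤ} {tb : O → ℕ} {e c : O}
    (hc : Raised S y f tb c) (h : Below f tb e c) : Raised S y f tb e :=
  lt_of_le_of_lt (card_le_card fun a ha => by
    simp only [mem_filter] at ha ⊢
    exact ⟨ha.1, ha.2.trans h⟩) hc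

/-- The score process `s` gives, at each step, one point to each of the `y` lowest members
of `S`. -/
def RaisesLowest (S : Finset O) (y : ℕ) (tb : O → ℕ) (s : ℕ → O → ℤ) : Prop :=
  ∀ t, ∀ c ∈ S, s (t + 1) c = s t c + if Raised S y (s t) tb c then 1 else 0

namespace RaisesLowest

variable {S : Finset O} {y : ℕ} {tb : O → ℕ} {s : ℕ → O → ℤ}

omit [Fintype O] [DecidableEq O]

lemma succ_of_raised (hs : RaisesLowest S y tb s) {t : ℕ} {c : O} (hc : c ∈ S)
    (h : Raised S y (s t) tb c) : s (t + 1) c = s t c + 1 := by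
  rw [hs t c hc, if_pos h]

lemma succ_of_not_raised (hs : RaisesLowest S y tb s) {t : ℕ} {c : O} (hc : c ∈ S)
    (h : ¬ Raised S y (s t) tb c) : s (t + 1) c = s t c := by
  rw [hs t c hc, if_neg h, add_zero]

lemma le_succ (hs : RaisesLowest S y tb s) (t : ℕ) {c : O} (hc : c ∈ S) :
    s t c ≤ s (t + 1) c := by
  rw [hs t c hc]; split_ifs <;> omega

lemma succ_le (hs : RaisesLowest S y tb s) (t : ℕ) {c : O} (hc : c ∈ S) :
    s (t + 1) c ≤ s t c + 1 := by
  rw [hs t c hc]; split_ifs <;> omega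

lemma mono (hs : RaisesLowest S y tb s) {c : O} (hc : c ∈ S) : Monotone fun t => s t c :=
  monotone_nat_of_le_succ fun t => hs.le_succ t hc

lemma le_add (hs : RaisesLowest S y tb s) {c : O} (hc : c ∈ S) (t n : ℕ) :
    s (t + n) c ≤ s t c + n := by
  induction n with
  | zero => simp
  | succ n ih =>
    have := hs.succ_le (t + n) hc
    push_cast
    rw [← add_assoc]
    omega

lemma eq_of_not_raised (hs : RaisesLowest S y tb s) {c : O} (hc : c ∈ S) (t n : ℕ)
    (h : ∀ a, t ≤ a → a < t + n → ¬ Raised S y (s a) tb c) : s (t + n) c = s t c := by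
  induction n with
  | zero => simp
  | succ n ih =>
    rw [← add_assoc, hs.succ_of_not_raised hc (h _ (by omega) (by omega))]
    exact ih fun a h₁ h₂ => h a h₁ (by omega)

lemma eq_add_of_raised (hs : RaisesLowest S y tb s) {c : O} (hc : c ∈ S) (t n : ℕ)
    (h : ∀ a, t ≤ a → a < t + n → Raised S y (s a) tb c) : s (t + n) c = s t c + n := by
  induction n with
  | zero => simp
  | succ n ih =>
    rw [← add_assoc, hs.succ_of_raised hc (h _ (by omega) (by omega)),
      ih fun a h₁ h₂ => h a h₁ (by omega)]
    push_cast
    ring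

/-- Once `c` has not been raised, more than `y` members of `S` lie below `c` with one
additional point. -/
lemma lt_card_below_add_one (hs : RaisesLowest S y tb s) {c : O} (hc : c ∈ S) {t₀ t : ℕ}
    (h : ¬ Raised S y (s t₀) tb c) (ht : t₀ < t) :
    y < #{e ∈ S | s t e < s t c + 1 ∨ (s t e = s t c + 1 ∧ tb c < tb e)} := by
  have unraised : ∀ t, ¬ Raised S y (s t) tb c →
      y < #{e ∈ S | s (t + 1) e < s (t + 1) c + 1 ∨
        (s (t + 1) e = s (t + 1) c + 1 ∧ tb c < tb e)} := by
    intro t h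
    have hsucc := hs.succ_of_not_raised hc h
    refine lt_of_le_of_lt (not_lt.mp h) (card_lt_card ?_)
    rw [ssubset_iff_of_subset]
    · exact ⟨c, by simp [hc], fun h => (mem_filter.mp h).2.asymm (mem_filter.mp h).2⟩
    · intro e he
      simp only [mem_filter] at he ⊢
      simp only [Below] at he
      have := hs.succ_le t he.1
      exact ⟨he.1, by omega⟩
  induction t, ht using Nat.le_induction with
  | base => exact unraised t₀ h
  | succ t _ ih =>
    by_cases hr : Raised S y (s t) tb c
    · have hsucc := hs.succ_of_raised hc hr
      refine lt_of_lt_of_le ih (card_le_card ?_)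
      intro e he
      simp only [mem_filter] at he ⊢
      have := hs.succ_le t he.1
      exact ⟨he.1, by omega⟩
    · exact unraised t hr

lemma le_add_one (hs : RaisesLowest S y tb s) {c d : O} (hc : c ∈ S) (hd : d ∈ S) {k a b : ℕ}
    (ha : a < k) (hb : b < k) (hca : ¬ Raised S y (s a) tb c) (hdb : Raised S y (s b) tb d) :
    s k d ≤ s k c + 1 := by
  -- the last time `d` is raised
  obtain ⟨t, htk, hdt, hlast⟩ : ∃ t < k, Raised S y (s t) tb d ∧
      ∀ t', t < t' → t' < k → ¬ Raised S y (s t') tb d := by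
    let T := (range k).filter fun t => Raised S y (s t) tb d
    have hT : T.Nonempty := ⟨b, by simp [T, hb, hdb]⟩
    have hmem := T.max'_mem hT
    simp only [T, mem_filter, mem_range] at hmem
    refine ⟨T.max' hT, hmem.1, hmem.2, fun t' h₁ h₂ h₃ => ?_⟩
    exact absurd (T.le_max' t' (by simp [T, h₂, h₃])) (not_le.mpr h₁)
  have hdk : s k d = s t d + 1 := by
    obtain ⟨n, rfl⟩ := Nat.exists_eq_add_of_lt htk
    rw [← hs.succ_of_raised hd hdt, show t + n + 1 = t + 1 + n by ring]
    exact hs.eq_of_not_raised hd _ _ fun a h₁ h₂ => hlast a (by omega) (by omega)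
  rcases le_or_gt t a with hta | hta
  · have hle : s t d ≤ s a c := by
      by_contra! hlt
      refine hca (lt_of_le_of_lt (card_le_card fun e he => ?_) hdt)
      simp only [mem_filter] at he ⊢
      simp only [Below] at he ⊢
      have := hs.mono he.1 hta
      simp only at this
      exact ⟨he.1, by omega⟩
    have := hs.mono hc ha.le
    simp only at this
    omega
  · have hlt : s t d ≤ s t c + 1 := by
      by_contra! hlt
      refine lt_asymm (hs.lt_card_below_add_one hc hca hta)
        (lt_of_le_of_lt (card_le_card fun e he => ?_) hdt)
      simp only [mem_filter] at he ⊢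
      simp only [Below] at he ⊢
      exact ⟨he.1, by omega⟩
    have hmono := hs.mono hc (Nat.succ_le_of_lt htk)
    simp only [Nat.succ_eq_add_one] at hmono
    by_cases hct : Raised S y (s t) tb c
    · have := hs.succ_of_raised hc hct
      omega
    · have hle : s t d ≤ s t c := by
        by_contra! hlt'
        refine hct (hdt.of_below (Or.inl hlt'))
      have := hs.le_succ t hc
      omega

/-- Growing a set from one element that is raised at some time and not raised at some time,
by elements sandwiched (possibly at different times) between earlier ones, keeps the final
scores within one of each other. -/
lemma abs_sub_le_one_of_sandwiched (hs : RaisesLowest S y tb s) {k : ℕ} {W : ℕ → Finset O}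
    {w : O} (hw : w ∈ S) (hW0 : W 0 ⊆ {w})
    (hW : ∀ n, ∀ u ∈ W (n + 1), u ∈ W n ∨ (u ∈ S ∧ ∃ a < k, ∃ b < k,
      (∃ v ∈ W n, Below (s a) tb u v) ∧ ∃ v ∈ W n, Below (s b) tb v u))
    (hraised : ∃ a < k, Raised S y (s a) tb w) (hnot : ∃ a < k, ¬ Raised S y (s a) tb w)
    {n₁ n₂ : ℕ} {u₁ u₂ : O} (h₁ : u₁ ∈ W n₁) (h₂ : u₂ ∈ W n₂) :
    |s k u₁ - s k u₂| ≤ 1 := by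
  have key : ∀ n, ∀ u ∈ W n, u ∈ S ∧
      (∃ v ∈ S, (∃ a < k, Raised S y (s a) tb v) ∧ s k u ≤ s k v) ∧
      (∃ v ∈ S, (∃ a < k, ¬ Raised S y (s a) tb v) ∧ s k v ≤ s k u) := by
    intro n
    induction n with
    | zero =>
      intro u hu
      obtain rfl : u = w := by simpa using hW0 hu
      exact ⟨hw, ⟨u, hw, hraised, le_rfl⟩, ⟨u, hw, hnot, le_rfl⟩⟩
    | succ n ih =>
      intro u hu
      obtain hu | ⟨huS, a, ha, b, hb, ⟨v, hv, huv⟩, v', hv', hvu⟩ := hW n u hu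
      · exact ih u hu
      refine ⟨huS, ?_, ?_⟩
      · by_cases hr : ∃ a < k, Raised S y (s a) tb u
        · exact ⟨u, huS, hr, le_rfl⟩
        · push Not at hr
          obtain ⟨hvS, ⟨z, hzS, hz, hvz⟩, -⟩ := ih v hv
          refine ⟨z, hzS, hz, le_trans ?_ hvz⟩
          obtain ⟨c, rfl⟩ := Nat.exists_eq_add_of_le ha.le
          have h₁ := hs.eq_of_not_raised huS a c fun t _ ht => hr t ht
          have h₂ := hs.mono hvS ha.le
          simp only [Below] at huv h₂
          omega
      · by_cases hr : ∃ a < k, ¬ Raised S y (s a) tb u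
        · exact ⟨u, huS, hr, le_rfl⟩
        · push Not at hr
          obtain ⟨hvS, -, z, hzS, hz, hvz⟩ := ih v' hv'
          refine ⟨z, hzS, hz, hvz.trans ?_⟩
          obtain ⟨c, rfl⟩ := Nat.exists_eq_add_of_le hb.le
          have h₁ := hs.eq_add_of_raised huS b c fun t _ ht => hr t ht
          have h₂ := hs.le_add hvS b c
          simp only [Below] at hvu
          omega
  have le : ∀ n n' u u', u ∈ W n → u' ∈ W n' → s k u ≤ s k u' + 1 := by
    intro n n' u u' hu hu'
    obtain ⟨-, ⟨v, hvS, ⟨b, hb, hvb⟩, huv⟩, -⟩ := key n u hu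
    obtain ⟨-, -, v', hvS', ⟨a, ha, hva⟩, huv'⟩ := key n' u' hu'
    have := hs.le_add_one hvS' hvS ha hb hva hvb
    omega
  have := le _ _ _ _ h₁ h₂
  have := le _ _ _ _ h₂ h₁
  rw [abs_le]
  omega

lemma abs_sub_le_one_of_rising (hs : RaisesLowest S y tb s) {k : ℕ} {W : ℕ → Finset O}
    {w : O} (hw : w ∈ S) (hW0 : W 0 ⊆ {w})
    (hW : ∀ n, ∀ u ∈ W (n + 1), u ∈ W n ∨ (u ∈ S ∧ ∃ a, a + 1 < k ∧
      (∃ v ∈ W n, Below (s a) tb u v) ∧ ∃ v ∈ W n, Below (s (a + 1)) tb v u))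
    (hraised : Raised S y (s 0) tb w)
    {n₁ n₂ : ℕ} {u₁ u₂ : O} (h₁ : u₁ ∈ W n₁) (h₂ : u₂ ∈ W n₂) :
    |s k u₁ - s k u₂| ≤ 1 := by
  by_cases hnot : ∃ a < k, ¬ Raised S y (s a) tb w
  · refine hs.abs_sub_le_one_of_sandwiched hw hW0 (fun n u hu => ?_)
      ⟨0, by omega, hraised⟩ hnot h₁ h₂
    exact (hW n u hu).imp_right fun ⟨huS, a, ha, h, h'⟩ =>
      ⟨huS, a, by omega, a + 1, ha, h, h'⟩
  · push Not at hnot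
    have key : ∀ n, W n ⊆ {w} := by
      intro n
      induction n with
      | zero => exact hW0
      | succ n ih =>
        intro u hu
        obtain hu | ⟨huS, a, ha, ⟨v, hv, huv⟩, v', hv', hvu⟩ := hW n u hu
        · exact ih hu
        obtain rfl : v = w := by simpa using ih hv
        obtain rfl : v' = v := by simpa using ih hv'
        have hr := hnot a (by omega)
        have e₁ := hs.succ_of_raised hw hr
        have e₂ := hs.succ_of_raised huS (hr.of_below huv)
        simp only [Below] at huv hvu
        omega
    have e₁ : u₁ = w := by simpa using key _ h₁
    have e₂ : u₂ = w := by simpa using key _ h₂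
    simp [e₁, e₂]

lemma abs_sub_le_one_of_falling (hs : RaisesLowest S y tb s) {k : ℕ} {W : ℕ → Finset O}
    {w : O} (hw : w ∈ S) (hW0 : W 0 ⊆ {w})
    (hW : ∀ n, ∀ u ∈ W (n + 1), u ∈ W n ∨ (u ∈ S ∧ ∃ a, a + 1 < k ∧
      (∃ v ∈ W n, Below (s a) tb v u) ∧ ∃ v ∈ W n, Below (s (a + 1)) tb u v))
    (hnot : ¬ Raised S y (s 0) tb w)
    {n₁ n₂ : ℕ} {u₁ u₂ : O} (h₁ : u₁ ∈ W n₁) (h₂ : u₂ ∈ W n₂) :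
    |s k u₁ - s k u₂| ≤ 1 := by
  by_cases hraised : ∃ a < k, Raised S y (s a) tb w
  · refine hs.abs_sub_le_one_of_sandwiched hw hW0 (fun n u hu => ?_)
      hraised ⟨0, by omega, hnot⟩ h₁ h₂
    exact (hW n u hu).imp_right fun ⟨huS, a, ha, h, h'⟩ =>
      ⟨huS, a + 1, ha, a, by omega, h', h⟩
  · push Not at hraised
    have key : ∀ n, W n ⊆ {w} := by
      intro n
      induction n with
      | zero => exact hW0
      | succ n ih =>
        intro u hu
        obtain hu | ⟨huS, a, ha, ⟨v, hv, hvu⟩, v', hv', huv⟩ := hW n u hu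
        · exact ih hu
        obtain rfl : v = w := by simpa using ih hv
        obtain rfl : v' = v := by simpa using ih hv'
        have hr := hraised a (by omega)
        have e₁ := hs.succ_of_not_raised hw hr
        have e₂ := hs.succ_of_not_raised huS fun h => hr (h.of_below hvu)
        simp only [Below] at huv hvu
        omega
    have e₁ : u₁ = w := by simpa using key _ h₁
    have e₂ : u₂ = w := by simpa using key _ h₂
    simp [e₁, e₂]

end RaisesLowest

lemma swf_lt_swf_iff {sc : ℕ → ℤ} {tb : O → ℕ} (htb : Function.Injective tb)
    (Q : List (O → ℕ)) (e c : O) :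
    swf sc tb Q e < swf sc tb Q c ↔ Below (score sc Q) tb e c := by
  have mono : ∀ e c, Below (score sc Q) tb e c → swf sc tb Q e < swf sc tb Q c := by
    intro e c h
    refine card_lt_card ?_
    rw [ssubset_iff_of_subset]
    · exact ⟨e, by simpa [Below] using h, by simp⟩
    · intro a ha
      simp only [mem_filter] at ha ⊢
      exact ⟨ha.1, Below.trans (f := score sc Q) ha.2 h⟩
  refine ⟨fun h => ?_, mono e c⟩
  by_contra hn
  by_cases hec : e = c
  · subst hec; exact lt_irrefl _ h
  · refine lt_asymm h (mono c e ?_)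
    have : tb e ≠ tb c := fun h => hec (htb h)
    unfold Below at hn ⊢
    omega

lemma swf_injective {sc : ℕ → ℤ} {tb : O → ℕ} (htb : Function.Injective tb)
    (Q : List (O → ℕ)) : Function.Injective (swf sc tb Q) := by
  intro a b hab
  apply htb
  have h₁ := (swf_lt_swf_iff (sc := sc) htb Q a b).not.mp hab.not_lt
  have h₂ := (swf_lt_swf_iff (sc := sc) htb Q b a).not.mp hab.symm.not_lt
  unfold Below at h₁ h₂
  omega

omit [Fintype O] [DecidableEq O] in
lemma card_above_add_card_below {r : O → ℕ} (hr : Function.Injective r) {S : Finset O} {o : O}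
    (ho : o ∈ S) : #{h ∈ S | r o < r h} + #{h ∈ S | r h < r o} + 1 = #S := by
  have hsplit := card_filter_add_card_filter_not (s := S) (fun h => r o < r h)
  have hle : S.filter (fun h => ¬ r o < r h) = insert o (S.filter fun h => r h < r o) := by
    ext a
    simp only [mem_filter, mem_insert, not_lt]
    constructor
    · rintro ⟨ha, h⟩
      rcases h.lt_or_eq with h | h
      · exact Or.inr ⟨ha, h⟩
      · exact Or.inl (hr h)
    · rintro (rfl | ⟨ha, h⟩)
      · exact ⟨ho, le_rfl⟩
      · exact ⟨ha, h.le⟩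
  rw [hle, card_insert_of_notMem (by simp)] at hsplit
  omega

omit [Fintype O] [DecidableEq O] in
lemma card_above_lt_iff {r : O → ℕ} {S : Finset O} {o o' : O}
    (ho : o ∈ S) :
    #{h ∈ S | r o < r h} < #{h ∈ S | r o' < r h} ↔ r o' < r o := by
  constructor
  · intro h
    by_contra! hle
    refine absurd h (not_lt.mpr (card_le_card fun a ha => ?_))
    simp only [mem_filter] at ha ⊢
    exact ⟨ha.1, by omega⟩
  · intro h
    refine card_lt_card ?_
    rw [ssubset_iff_of_subset]
    · exact ⟨o, by simp [ho, h], by simp⟩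
    · intro a ha
      simp only [mem_filter] at ha ⊢
      exact ⟨ha.1, by omega⟩

lemma buildVote_of_mem (r : O → ℕ) {H : Finset O} {o : O} (ho : o ∈ H) :
    buildVote r H o = Fintype.card O - #H + #{h ∈ H | r o < r h} := by
  simp [buildVote, ho]

lemma buildVote_of_notMem (r : O → ℕ) {H : Finset O} {o : O} (ho : o ∉ H) :
    buildVote r H o = #{h ∈ univ \ H | r o < r h} := by
  simp only [buildVote, ho, if_false]
  congr 1
  ext a
  simp

lemma buildVote_lt_of_notMem_of_mem {r : O → ℕ} (hr : Function.Injective r) {H : Finset O}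
    {o o' : O} (ho : o ∉ H) (ho' : o' ∈ H) : buildVote r H o < buildVote r H o' := by
  rw [buildVote_of_mem r ho', buildVote_of_notMem r ho]
  have h₁ := card_above_add_card_below hr (S := univ \ H) (o := o) (by simp [ho])
  have h₂ := card_univ_sdiff H
  omega

lemma stageVote_lt_iff_of_mem {sc : ℕ → ℤ} {tb : O → ℕ} (htb : Function.Injective tb)
    {P : List (O → ℕ)} {H : Finset O} {a : ℕ} {o o' : O} (ho : o ∈ H) (ho' : o' ∈ H) :
    stageVote sc tb P H (a + 1) o < stageVote sc tb P H (a + 1) o' ↔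
      Below (score sc (P ++ stageProfile sc tb P H a)) tb o' o := by
  rw [stageVote, buildVote_of_mem _ ho, buildVote_of_mem _ ho', add_lt_add_iff_left,
    card_above_lt_iff ho, swf_lt_swf_iff htb, Nat.add_sub_cancel]

lemma stageVote_lt_iff_of_notMem {sc : ℕ → ℤ} {tb : O → ℕ} (htb : Function.Injective tb)
    {P : List (O → ℕ)} {H : Finset O} {a : ℕ} {o o' : O} (ho : o ∉ H) (ho' : o' ∉ H) :
    stageVote sc tb P H (a + 1) o < stageVote sc tb P H (a + 1) o' ↔
      Below (score sc (P ++ stageProfile sc tb P H a)) tb o' o := by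
  rw [stageVote, buildVote_of_notMem _ ho, buildVote_of_notMem _ ho',
    card_above_lt_iff (by simpa using ho), swf_lt_swf_iff htb,
    Nat.add_sub_cancel]

lemma score_stageProfile_succ (sc : ℕ → ℤ) (tb : O → ℕ) (P : List (O → ℕ)) (H : Finset O)
    (n : ℕ) (c : O) :
    score sc (P ++ stageProfile sc tb P H (n + 1)) c =
      score sc (P ++ stageProfile sc tb P H n) c +
        sc (buildVote (swf sc tb (P ++ stageProfile sc tb P H n)) H c) := by
  simp [score, stageProfile, add_assoc]

lemma raised_iff_card_swf {sc : ℕ → ℤ} {tb : O → ℕ} (htb : Function.Injective tb)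
    (Q : List (O → ℕ)) (S : Finset O) (y : ℕ) (c : O) :
    Raised S y (score sc Q) tb c ↔ #{h ∈ S | swf sc tb Q h < swf sc tb Q c} < y := by
  simp only [Raised, swf_lt_swf_iff htb]

lemma raisesLowest_mem (x : ℕ) {tb : O → ℕ} (htb : Function.Injective tb)
    (P : List (O → ℕ)) (H : Finset O) :
    RaisesLowest H x tb fun t => score (approvalVec (Fintype.card O) x)
      (P ++ stageProfile (approvalVec (Fintype.card O) x) tb P H t) := by
  intro t c hc
  simp only
  rw [score_stageProfile_succ, buildVote_of_mem _ hc, approvalVec, raised_iff_card_swf htb]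
  have h := card_above_add_card_below (swf_injective
    (sc := approvalVec (Fintype.card O) x) htb
    (P ++ stageProfile (approvalVec (Fintype.card O) x) tb P H t)) hc
  have hH := card_le_univ H
  congr 1
  split_ifs <;> omega

lemma raisesLowest_compl (x : ℕ) {tb : O → ℕ} (htb : Function.Injective tb)
    (P : List (O → ℕ)) (H : Finset O) :
    RaisesLowest (univ \ H) (x - #H) tb fun t => score (approvalVec (Fintype.card O) x)
      (P ++ stageProfile (approvalVec (Fintype.card O) x) tb P H t) := by
  intro t c hc
  simp only
  rw [score_stageProfile_succ, buildVote_of_notMem _ (by simpa using hc), approvalVec,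
    raised_iff_card_swf htb]
  have h := card_above_add_card_below (swf_injective
    (sc := approvalVec (Fintype.card O) x) htb
    (P ++ stageProfile (approvalVec (Fintype.card O) x) tb P H t)) hc
  have hH := card_le_univ H
  have hd := card_univ_sdiff H
  congr 1
  split_ifs <;> omega

omit [Fintype O] [DecidableEq O] in
lemma exists_botWithin_one_subset {r : O → ℕ} (hr : Function.Injective r) {S : Finset O}
    (hS : S.Nonempty) :
    ∃ w ∈ S, (∀ e ∈ S, ¬ r e < r w) ∧ botWithin r S 1 ⊆ {w} := by
  obtain ⟨w, hw, hmin⟩ := S.exists_min_image r hS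
  refine ⟨w, hw, fun e he => not_lt.mpr (hmin e he), fun u hu => ?_⟩
  simp only [botWithin, mem_filter, Nat.lt_one_iff, card_eq_zero, filter_eq_empty_iff,
    not_lt] at hu
  exact mem_singleton.mpr (hr (le_antisymm (hu.2 hw) (hmin u hu.1)))

omit [Fintype O] [DecidableEq O] in
lemma exists_topWithin_one_subset {r : O → ℕ} (hr : Function.Injective r) {S : Finset O}
    (hS : S.Nonempty) :
    ∃ w ∈ S, (∀ e ∈ S, ¬ r w < r e) ∧ topWithin r S 1 ⊆ {w} := by
  obtain ⟨w, hw, hmax⟩ := S.exists_max_image r hS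
  refine ⟨w, hw, fun e he => not_lt.mpr (hmax e he), fun u hu => ?_⟩
  simp only [topWithin, mem_filter, Nat.lt_one_iff, card_eq_zero, filter_eq_empty_iff,
    not_lt] at hu
  exact mem_singleton.mpr (hr (le_antisymm (hmax u hu.1) (hu.2 hw)))

lemma Uaux_subset {sc : ℕ → ℤ} {tb : O → ℕ} (htb : Function.Injective tb)
    (P : List (O → ℕ)) (pt : O → ℕ) (H : Finset O) (k n : ℕ) :
    Uaux sc tb P pt H k n ⊆ H := by
  induction n with
  | zero => exact filter_subset _ _
  | succ n ih =>
    intro u hu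
    simp only [Uaux, mem_union, mem_filter, mem_univ, true_and] at hu
    obtain hu | ⟨l, -, -, ⟨v, hv, hlt⟩, -⟩ := hu
    · exact ih hu
    · by_contra hn
      exact lt_asymm hlt (buildVote_lt_of_notMem_of_mem (swf_injective htb _) hn (ih hv))

lemma Daux_subset {sc : ℕ → ℤ} {tb : O → ℕ} (htb : Function.Injective tb)
    (P : List (O → ℕ)) (pt : O → ℕ) (H : Finset O) (k n : ℕ) :
    Daux sc tb P pt H k n ⊆ univ \ H := by
  induction n with
  | zero => exact filter_subset _ _
  | succ n ih =>
    intro d hd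
    simp only [Daux, mem_union, mem_filter, mem_univ, true_and] at hd
    obtain hd | ⟨l, -, -, ⟨v, hv, hlt⟩, -⟩ := hd
    · exact ih hd
    · have hvH : v ∉ H := by simpa using ih hv
      by_contra hn
      refine lt_asymm hlt (buildVote_lt_of_notMem_of_mem (swf_injective htb _) hvH ?_)
      simpa using hn

lemma abs_score_sub_le_one_of_mem_Uset {x : ℕ} (hx : 1 ≤ x) {tb : O → ℕ}
    (htb : Function.Injective tb) (P : List (O → ℕ)) (H : Finset O) (k : ℕ) {u₁ u₂ : O}
    (h₁ : u₁ ∈ Uset (approvalVec (Fintype.card O) x) tb P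
      (swf (approvalVec (Fintype.card O) x) tb P) H k)
    (h₂ : u₂ ∈ Uset (approvalVec (Fintype.card O) x) tb P
      (swf (approvalVec (Fintype.card O) x) tb P) H k) :
    |score (approvalVec (Fintype.card O) x)
        (P ++ stageProfile (approvalVec (Fintype.card O) x) tb P H k) u₁ -
      score (approvalVec (Fintype.card O) x)
        (P ++ stageProfile (approvalVec (Fintype.card O) x) tb P H k) u₂| ≤ 1 := by
  simp only [Uset, mem_filter, mem_univ, true_and] at h₁ h₂
  obtain ⟨n₁, h₁⟩ := h₁
  obtain ⟨n₂, h₂⟩ := h₂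
  have hsub := Uaux_subset (sc := approvalVec (Fintype.card O) x) htb P
    (swf (approvalVec (Fintype.card O) x) tb P) H k
  obtain ⟨w, hw, hmin, hW0⟩ := exists_botWithin_one_subset
    (swf_injective (sc := approvalVec (Fintype.card O) x) htb P) ⟨u₁, hsub _ h₁⟩
  refine (raisesLowest_mem x htb P H).abs_sub_le_one_of_rising hw hW0 (fun n u hu => ?_) ?_
    h₁ h₂
  · have huH := hsub _ hu
    simp only [Uaux, mem_union, mem_filter, mem_univ, true_and] at hu
    refine hu.imp_right ?_
    rintro ⟨l, hl, hlk, ⟨v, hv, hvu⟩, v', hv', huv⟩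
    obtain ⟨a, rfl⟩ := Nat.exists_eq_add_of_le' hl
    exact ⟨huH, a, hlk, ⟨v, hv, (stageVote_lt_iff_of_mem htb (hsub _ hv) huH).mp hvu⟩,
      v', hv', (stageVote_lt_iff_of_mem htb huH (hsub _ hv')).mp huv⟩
  · rw [raised_iff_card_swf htb, filter_false_of_mem]
    · rwa [card_empty]
    · simpa [stageProfile] using hmin

lemma abs_score_sub_le_one_of_mem_Dset {x : ℕ} (hx : x < Fintype.card O) {tb : O → ℕ}
    (htb : Function.Injective tb) (P : List (O → ℕ)) (H : Finset O) (k : ℕ) {d₁ d₂ : O}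
    (h₁ : d₁ ∈ Dset (approvalVec (Fintype.card O) x) tb P
      (swf (approvalVec (Fintype.card O) x) tb P) H k)
    (h₂ : d₂ ∈ Dset (approvalVec (Fintype.card O) x) tb P
      (swf (approvalVec (Fintype.card O) x) tb P) H k) :
    |score (approvalVec (Fintype.card O) x)
        (P ++ stageProfile (approvalVec (Fintype.card O) x) tb P H k) d₁ -
      score (approvalVec (Fintype.card O) x)
        (P ++ stageProfile (approvalVec (Fintype.card O) x) tb P H k) d₂| ≤ 1 := by
  simp only [Dset, mem_filter, mem_univ, true_and] at h₁ h₂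
  obtain ⟨n₁, h₁⟩ := h₁
  obtain ⟨n₂, h₂⟩ := h₂
  have hsub := Daux_subset (sc := approvalVec (Fintype.card O) x) htb P
    (swf (approvalVec (Fintype.card O) x) tb P) H k
  have hinj := swf_injective (sc := approvalVec (Fintype.card O) x) htb P
  obtain ⟨w, hw, hmax, hW0⟩ := exists_topWithin_one_subset hinj ⟨d₁, hsub _ h₁⟩
  refine (raisesLowest_compl x htb P H).abs_sub_le_one_of_falling hw hW0 (fun n d hd => ?_) ?_
    h₁ h₂
  · have hdH := hsub _ hd
    have hsub' : ∀ v ∈ Daux (approvalVec (Fintype.card O) x) tb P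
        (swf (approvalVec (Fintype.card O) x) tb P) H k n, v ∉ H := fun v hv => by
      simpa using hsub _ hv
    have hdH' : d ∉ H := by simpa using hdH
    simp only [Daux, mem_union, mem_filter, mem_univ, true_and] at hd
    refine hd.imp_right ?_
    rintro ⟨l, hl, hlk, ⟨v, hv, hdv⟩, v', hv', hvd⟩
    obtain ⟨a, rfl⟩ := Nat.exists_eq_add_of_le' hl
    exact ⟨hdH, a, hlk,
      ⟨v, hv, (stageVote_lt_iff_of_notMem htb hdH' (hsub' _ hv)).mp hdv⟩,
      v', hv', (stageVote_lt_iff_of_notMem htb (hsub' _ hv') hdH').mp hvd⟩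
  · rw [raised_iff_card_swf htb]
    simp only [stageProfile, List.append_nil]
    have hcard := card_above_add_card_below hinj hw
    rw [filter_false_of_mem hmax, card_empty] at hcard
    have hd := card_univ_sdiff H
    omega

/-- Lemma 3: at a fixed iteration `i` of Algorithm 2 with the x-approval
rule, after all `k` stages any two members of `U^i` have scores differing by at most one,
and likewise for `D^i`. -/
theorem lemma3_scores_close
    (x : ℕ) (hx1 : 1 ≤ x) (hx2 : x < Fintype.card O)
    (tb : O → ℕ) (P : List (O → ℕ)) (po : O → ℕ) (p : O) (i k : ℕ)
    (htb : Function.Injective tb) (hP : ∀ q ∈ P, IsVote q) (hpo : IsVote po)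
    (hi1 : 1 ≤ i) (hi2 : i ≤ (Fintype.card O + 1) / 2) :
    (∀ u1 ∈ UsetAlg (approvalVec (Fintype.card O) x) tb P po p i k,
        ∀ u2 ∈ UsetAlg (approvalVec (Fintype.card O) x) tb P po p i k,
          |stageScoreAlg (approvalVec (Fintype.card O) x) tb P po p i k u1 -
              stageScoreAlg (approvalVec (Fintype.card O) x) tb P po p i k u2| ≤ 1) ∧
      ∀ d1 ∈ DsetAlg (approvalVec (Fintype.card O) x) tb P po p i k,
        ∀ d2 ∈ DsetAlg (approvalVec (Fintype.card O) x) tb P po p i k,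
          |stageScoreAlg (approvalVec (Fintype.card O) x) tb P po p i k d1 -
              stageScoreAlg (approvalVec (Fintype.card O) x) tb P po p i k d2| ≤ 1 := by
  exact ⟨fun _ h₁ _ h₂ => abs_score_sub_le_one_of_mem_Uset hx1 htb P _ k h₁ h₂,
    fun _ h₁ _ h₂ => abs_score_sub_le_one_of_mem_Dset hx2 htb P _ k h₁ h₂⟩
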